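/- The Fisher information between two multivariate centered Gaussians whose covariance matrices Σ₁, Σ₂ commute, with Σ₂ invertible, satisfies I(N(0,Σ₁)|N(0,Σ₂)) = Tr(Σ₂⁻² (Σ₂−Σ₁)² Σ₁⁻¹). -/

import Mathlib

open Real Matrix MeasureTheory

/-- Partial derivative in direction `i`. -/
noncomputable def pd {n : ℕ} (i : Fin n) (g : (Fin n → ℝ) → ℝ) (x : Fin n → ℝ) : ℝ :=
  fderiv ℝ g x (Pi.single i 1)

/-- Density of the centered Gaussian measure on `ℝ^d` with covariance matrix `S`. -/
noncomputable def gaussDensity {d : ℕ} (S : Matrix (Fin d) (Fin d) ℝ) (x : Fin d → ℝ) : ℝ :=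
  (Real.sqrt ((2 * π) ^ d * S.det))⁻¹ * Real.exp (-(x ⬝ᵥ S⁻¹.mulVec x) / 2)

/-- Fisher information `I(p|q) = ∫ p ‖∇ log (p/q)‖²`. -/
noncomputable def fisherInfo {d : ℕ} (p q : (Fin d → ℝ) → ℝ) : ℝ :=
  ∫ x, p x * ∑ i : Fin d, (pd i (fun y => Real.log (p y / q y)) x) ^ 2

/-! The density of `N(0, S)` is that of the image of a standard Gaussian vector under `√S`, so its
second moments are the entries of `S`. Since `∇ log p = -S₁⁻¹ x` and `∇ log q = -S₂⁻¹ x`, the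
integrand `‖∇ log (p / q)‖²` is the quadratic form of `(S₁⁻¹ - S₂⁻¹)²`, and integrating it against
`p` gives `Tr ((S₁⁻¹ - S₂⁻¹)² S₁)`. When `S₁` and `S₂` commute, this can be rearranged using
`S₁⁻¹ - S₂⁻¹ = S₂⁻¹ (S₂ - S₁) S₁⁻¹`. -/

open ProbabilityTheory WithLp

theorem pi_withDensity_ofReal {ι : Type*} [Fintype ι] {X : ι → Type*}
    [∀ i, MeasurableSpace (X i)] {μ : ∀ i, Measure (X i)} [∀ i, SigmaFinite (μ i)]
    {f : ∀ i, X i → ℝ} (hf : ∀ i, Integrable (f i) (μ i)) (hf₀ : ∀ i x, 0 ≤ f i x) :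
    Measure.pi (fun i ↦ (μ i).withDensity fun x ↦ ENNReal.ofReal (f i x)) =
      (Measure.pi μ).withDensity fun x ↦ ENNReal.ofReal (∏ i, f i (x i)) := by
  have hprod (x : ∀ i, X i) : 0 ≤ ∏ i, f i (x i) := Finset.prod_nonneg fun i _ ↦ hf₀ i _
  refine Measure.pi_eq fun s hs ↦ ?_
  rw [withDensity_apply _ (.univ_pi hs), Measure.restrict_pi_pi,
    ← ofReal_integral_eq_lintegral_ofReal (.fintype_prod_dep fun i ↦ (hf i).restrict)
      (.of_forall hprod),
    integral_fintype_prod_eq_prod, ENNReal.ofReal_prod_of_nonneg fun i _ ↦ integral_nonneg (hf₀ i)]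
  refine Finset.prod_congr rfl fun i _ ↦ ?_
  rw [withDensity_apply _ (hs i),
    ofReal_integral_eq_lintegral_ofReal (hf i).restrict (.of_forall (hf₀ i))]

theorem integral_dotProduct_mulVec {Ω ι : Type*} [Fintype ι] [MeasurableSpace Ω] {μ : Measure Ω}
    {X : Ω → ι → ℝ} (hX : ∀ i j, Integrable (fun ω ↦ X ω i * X ω j) μ) (B : Matrix ι ι ℝ) :
    ∫ ω, X ω ⬝ᵥ B *ᵥ X ω ∂μ = (B * of fun i j ↦ ∫ ω, X ω i * X ω j ∂μ).trace := by
  have hexpand (x : ι → ℝ) : x ⬝ᵥ B *ᵥ x = ∑ i, ∑ j, B i j * (x j * x i) := by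
    simp only [dotProduct, mulVec, Finset.mul_sum]
    exact Finset.sum_congr rfl fun i _ ↦ Finset.sum_congr rfl fun j _ ↦ by ring
  have hint (i j : ι) : Integrable (fun ω ↦ B i j * (X ω j * X ω i)) μ := (hX j i).const_mul _
  calc ∫ ω, X ω ⬝ᵥ B *ᵥ X ω ∂μ
    _ = ∑ i, ∑ j, B i j * ∫ ω, X ω j * X ω i ∂μ := by
      simp_rw [hexpand, ← integral_const_mul]
      rw [integral_finsetSum _ fun i _ ↦ integrable_finsetSum _ fun j _ ↦ hint i j]
      exact Finset.sum_congr rfl fun i _ ↦ integral_finsetSum _ fun j _ ↦ hint i j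
    _ = (B * of fun i j ↦ ∫ ω, X ω i * X ω j ∂μ).trace := rfl

theorem hasFDerivAt_dotProduct_mulVec {ι : Type*} [Fintype ι] (A : Matrix ι ι ℝ) (x : ι → ℝ) :
    HasFDerivAt (fun y ↦ y ⬝ᵥ A *ᵥ y)
      (dotProductBilin ℝ ℝ ((A + Aᵀ) *ᵥ x)).toContinuousLinearMap x := by
  classical
  have h := (toLinearMap₂' ℝ A).toContinuousBilinearMap.hasFDerivAt_of_bilinear
    (hasFDerivAt_id x) (hasFDerivAt_id x)
  simp only [LinearMap.toContinuousBilinearMap_apply, toLinearMap₂'_apply', id] at h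
  refine h.congr_fderiv (ContinuousLinearMap.ext fun v ↦ ?_)
  simp [toLinearMap₂'_apply', add_mulVec, dotProduct_mulVec, mulVec_transpose, dotProduct_comm,
    add_comm]

theorem sq_inv_sub_inv_mul {n R : Type*} [Fintype n] [DecidableEq n] [CommRing R]
    {A B : Matrix n n R} (hA : IsUnit A) (hB : IsUnit B) (hAB : Commute A B) :
    (A⁻¹ - B⁻¹) ^ 2 * A = B⁻¹ ^ 2 * (B - A) ^ 2 * A⁻¹ := by
  have commute_inv {C D : Matrix n n R} (h : Commute C D) : Commute C D⁻¹ := by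
    simpa only [Matrix.zpow_neg_one] using Matrix.Commute.zpow_right h (-1)
  have hBD : Commute B⁻¹ (B - A) := (commute_inv ((Commute.refl B).sub_left hAB)).symm
  have hBDA : Commute (B⁻¹ * (B - A)) A⁻¹ :=
    commute_inv ((commute_inv hAB).symm.mul_left (hAB.symm.sub_left (.refl A)))
  have hinv : A⁻¹ - B⁻¹ = B⁻¹ * (B - A) * A⁻¹ := by
    rw [← neg_sub, Matrix.inv_sub_inv (iff_of_true hB hA), ← neg_sub B A, mul_neg, neg_mul, neg_neg]
  rw [hinv, hBDA.mul_pow, hBD.mul_pow, sq A⁻¹, ← mul_assoc,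
    nonsing_inv_mul_cancel_right _ _ ((isUnit_iff_isUnit_det A).mp hA)]

section MultivariateGaussian

variable {ι : Type*} [Fintype ι] [DecidableEq ι] {m : EuclideanSpace ℝ ι} {S : Matrix ι ι ℝ}

theorem memLp_eval_multivariateGaussian (i : ι) :
    MemLp (fun x ↦ x i) 2 (multivariateGaussian m S) :=
  IsGaussian.memLp_two_id.eval_piLp i

theorem integral_eval_multivariateGaussian (i : ι) :
    ∫ x, x i ∂multivariateGaussian m S = m i := by
  rw [← eval_integral_piLp fun j ↦ (memLp_eval_multivariateGaussian j).integrable one_le_two,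
    integral_id_multivariateGaussian]

theorem integral_eval_mul_eval_multivariateGaussian (hS : S.PosSemidef) (i j : ι) :
    ∫ x, x i * x j ∂multivariateGaussian m S = S i j + m i * m j := by
  have hcov := covariance_eval_multivariateGaussian (μ := m) hS i j
  rw [covariance_eq_sub (memLp_eval_multivariateGaussian i) (memLp_eval_multivariateGaussian j),
    integral_eval_multivariateGaussian, integral_eval_multivariateGaussian] at hcov
  exact sub_eq_iff_eq_add.mp hcov

theorem integral_dotProduct_mulVec_multivariateGaussian (hS : S.PosSemidef) (B : Matrix ι ι ℝ) :
    ∫ x, x ⬝ᵥ B *ᵥ x ∂multivariateGaussian 0 S = (B * S).trace := by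
  rw [integral_dotProduct_mulVec (X := fun x : EuclideanSpace ℝ ι ↦ ofLp x) fun i j ↦
    (memLp_eval_multivariateGaussian i).integrable_mul (memLp_eval_multivariateGaussian j)]
  simp_rw [integral_eval_mul_eval_multivariateGaussian hS, PiLp.zero_apply, mul_zero, add_zero]
  rfl

end MultivariateGaussian

section GaussDensity

variable {d : ℕ} {S C : Matrix (Fin d) (Fin d) ℝ}

theorem gaussDensity_pos (hS : 0 < S.det) (x : Fin d → ℝ) : 0 < gaussDensity S x := by
  unfold gaussDensity
  positivity

theorem measurable_gaussDensity (S : Matrix (Fin d) (Fin d) ℝ) : Measurable (gaussDensity S) := by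
  unfold gaussDensity dotProduct
  fun_prop

theorem gaussDensity_one (x : Fin d → ℝ) :
    gaussDensity 1 x = ∏ i, gaussianPDFReal 0 1 (x i) := by
  have hconst : √((2 * π) ^ d) = √(2 * π) ^ d := by
    rw [Real.sqrt_eq_iff_mul_self_eq (by positivity) (by positivity), ← mul_pow,
      Real.mul_self_sqrt (by positivity)]
  calc gaussDensity 1 x
    _ = (√(2 * π) ^ d)⁻¹ * Real.exp (-(∑ i, x i * x i) / 2) := by
      simp only [gaussDensity, det_one, mul_one, inv_one, one_mulVec, dotProduct, hconst]
    _ = ∏ i, gaussianPDFReal 0 1 (x i) := by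
      simp only [gaussianPDFReal, NNReal.coe_one, mul_one, sub_zero, Finset.prod_mul_distrib,
        Finset.prod_const, Finset.card_univ, Fintype.card_fin, inv_pow, ← Real.exp_sum,
        ← Finset.sum_div, Finset.sum_neg_distrib, sq]

theorem gaussDensity_mulVec (S : Matrix (Fin d) (Fin d) ℝ) (hC : IsUnit C.det) (x : Fin d → ℝ) :
    |C.det| * gaussDensity (C * S * Cᵀ) (C *ᵥ x) = gaussDensity S x := by
  have hnorm : √((2 * π) ^ d * (C * S * Cᵀ).det) = |C.det| * √((2 * π) ^ d * S.det) := by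
    rw [det_mul, det_mul, det_transpose, ← Real.sqrt_sq_eq_abs, ← Real.sqrt_mul (sq_nonneg _)]
    ring_nf
  have hquad : (C *ᵥ x) ⬝ᵥ (C * S * Cᵀ)⁻¹ *ᵥ (C *ᵥ x) = x ⬝ᵥ S⁻¹ *ᵥ x := by
    have hinv : Cᵀ * (C * S * Cᵀ)⁻¹ * C = S⁻¹ := by
      rw [Matrix.mul_inv_rev, Matrix.mul_inv_rev,
        mul_nonsing_inv_cancel_left _ _ (isUnit_det_transpose _ hC),
        nonsing_inv_mul_cancel_right _ _ hC]
    rw [dotProduct_comm, ← dotProduct_transpose_mulVec, mulVec_mulVec, mulVec_mulVec, hinv]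
  rw [gaussDensity, gaussDensity, hnorm, hquad, mul_inv, ← mul_assoc,
    mul_inv_cancel_left₀ (abs_ne_zero.mpr hC.ne_zero)]

theorem pi_gaussianReal_eq_withDensity_gaussDensity (d : ℕ) :
    Measure.pi (fun _ : Fin d ↦ gaussianReal 0 1) =
      volume.withDensity fun x ↦ ENNReal.ofReal (gaussDensity 1 x) := by
  simp_rw [gaussDensity_one, gaussianReal_of_var_ne_zero _ one_ne_zero, volume_pi]
  exact pi_withDensity_ofReal (fun _ ↦ integrable_gaussianPDFReal 0 1)
    fun _ ↦ gaussianPDFReal_nonneg 0 1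

theorem map_mulVec_withDensity_gaussDensity (S : Matrix (Fin d) (Fin d) ℝ) (hC : IsUnit C.det) :
    (volume.withDensity fun x ↦ ENNReal.ofReal (gaussDensity S x)).map (C *ᵥ ·) =
      volume.withDensity fun x ↦ ENNReal.ofReal (gaussDensity (C * S * Cᵀ) x) := by
  have hbij : Function.Bijective (C *ᵥ ·) := by
    rw [← isUnit_iff_isUnit_det] at hC
    exact ⟨mulVec_injective_of_isUnit hC, mulVec_surjective_iff_isUnit.mpr hC⟩
  have hmeas : Measurable (C *ᵥ ·) := by fun_prop
  have hderiv (x : Fin d → ℝ) : HasFDerivAt (C *ᵥ ·) (toLin' C).toContinuousLinearMap x :=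
    (toLin' C).toContinuousLinearMap.hasFDerivAt
  ext s hs
  rw [Measure.map_apply hmeas hs, withDensity_apply _ (hmeas hs), withDensity_apply _ hs,
    ← hbij.surjective.image_preimage s, lintegral_image_eq_lintegral_abs_det_fderiv_mul _ (hmeas hs)
      (fun x _ ↦ (hderiv x).hasFDerivWithinAt) hbij.injective.injOn, hbij.surjective.image_preimage]
  simp_rw [LinearMap.det_toContinuousLinearMap, LinearMap.det_toLin',
    ← ENNReal.ofReal_mul (abs_nonneg _), gaussDensity_mulVec S hC]

open scoped MatrixOrder in
theorem map_ofLp_multivariateGaussian (hS : S.PosDef) :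
    (multivariateGaussian 0 S).map ofLp =
      volume.withDensity fun x ↦ ENNReal.ofReal (gaussDensity S x) := by
  have hsymm : (CFC.sqrt S)ᵀ = CFC.sqrt S := (CFC.sqrt_nonneg S).isSelfAdjoint.star_eq
  have hsqrt : CFC.sqrt S * 1 * (CFC.sqrt S)ᵀ = S := by
    rw [mul_one, hsymm, CFC.sqrt_mul_sqrt_self _ hS.posSemidef.nonneg]
  have hdet : IsUnit (CFC.sqrt S).det := by
    rw [← isUnit_iff_isUnit_det]
    exact (CFC.isUnit_sqrt_iff S).mpr hS.isUnit
  rw [multivariateGaussian, ← map_pi_eq_stdGaussian, Measure.map_map (by fun_prop) (by fun_prop),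
    Measure.map_map (by fun_prop) (by fun_prop), pi_gaussianReal_eq_withDensity_gaussDensity]
  simp only [Function.comp_def, zero_add, toEuclideanCLM_toLp]
  rw [map_mulVec_withDensity_gaussDensity 1 hdet, hsqrt]

theorem integral_gaussDensity_smul {E : Type*} [NormedAddCommGroup E] [NormedSpace ℝ E]
    (hS : S.PosDef) (f : (Fin d → ℝ) → E) :
    ∫ x, gaussDensity S x • f x = ∫ x, f (ofLp x) ∂multivariateGaussian 0 S :=
  calc ∫ x, gaussDensity S x • f x
    _ = ∫ x, f x ∂volume.withDensity fun x ↦ ENNReal.ofReal (gaussDensity S x) := by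
      rw [integral_withDensity_eq_integral_toReal_smul
        (measurable_gaussDensity S).ennreal_ofReal (.of_forall fun _ ↦ ENNReal.ofReal_lt_top)]
      simp_rw [ENNReal.toReal_ofReal (gaussDensity_pos hS.det_pos _).le]
    _ = ∫ x, f (ofLp x) ∂multivariateGaussian 0 S := by
      rw [← map_ofLp_multivariateGaussian hS]
      exact (MeasurableEquiv.toLp 2 (Fin d → ℝ)).symm.measurableEmbedding.integral_map f

theorem hasFDerivAt_log_gaussDensity (hS : S.PosDef) (x : Fin d → ℝ) :
    HasFDerivAt (fun y ↦ Real.log (gaussDensity S y))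
      (-(dotProductBilin ℝ ℝ (S⁻¹ *ᵥ x)).toContinuousLinearMap) x := by
  have hnorm : (√((2 * π) ^ d * S.det))⁻¹ ≠ 0 := by
    have hdet := hS.det_pos
    positivity
  have hlog (y : Fin d → ℝ) : Real.log (gaussDensity S y) =
      Real.log (√((2 * π) ^ d * S.det))⁻¹ + -(1 / 2) * (y ⬝ᵥ S⁻¹ *ᵥ y) := by
    rw [gaussDensity, Real.log_mul hnorm (Real.exp_ne_zero _), Real.log_exp]
    ring
  have hsymm : S⁻¹ᵀ = S⁻¹ := hS.inv.isHermitian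
  simp_rw [hlog]
  refine (((hasFDerivAt_dotProduct_mulVec S⁻¹ x).const_mul (-(1 / 2))).const_add _).congr_fderiv
    (ContinuousLinearMap.ext fun v ↦ ?_)
  simp only [hsymm, add_mulVec, map_add, smul_add, _root_.add_apply, _root_.neg_apply,
    _root_.smul_apply, LinearMap.coe_toContinuousLinearMap', dotProductBilin_apply_apply,
    smul_eq_mul]
  ring

end GaussDensity

section FisherInfo

variable {d : ℕ} {S₁ S₂ : Matrix (Fin d) (Fin d) ℝ}

theorem pd_log_gaussDensity_div (h₁ : S₁.PosDef) (h₂ : S₂.PosDef) (i : Fin d) (x : Fin d → ℝ) :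
    pd i (fun y ↦ Real.log (gaussDensity S₁ y / gaussDensity S₂ y)) x =
      -((S₁⁻¹ - S₂⁻¹) *ᵥ x) i := by
  have hlog (y : Fin d → ℝ) : Real.log (gaussDensity S₁ y / gaussDensity S₂ y) =
      Real.log (gaussDensity S₁ y) - Real.log (gaussDensity S₂ y) :=
    Real.log_div (gaussDensity_pos h₁.det_pos y).ne' (gaussDensity_pos h₂.det_pos y).ne'
  simp_rw [hlog, pd]
  rw [((hasFDerivAt_log_gaussDensity h₁ x).fun_sub (hasFDerivAt_log_gaussDensity h₂ x)).fderiv]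
  simp only [_root_.sub_apply, _root_.neg_apply, LinearMap.coe_toContinuousLinearMap',
    dotProductBilin_apply_apply, dotProduct_single, mul_one, sub_mulVec, Pi.sub_apply]
  ring

theorem sum_pd_log_gaussDensity_div_sq (h₁ : S₁.PosDef) (h₂ : S₂.PosDef) (x : Fin d → ℝ) :
    ∑ i, pd i (fun y ↦ Real.log (gaussDensity S₁ y / gaussDensity S₂ y)) x ^ 2 =
      x ⬝ᵥ (S₁⁻¹ - S₂⁻¹) ^ 2 *ᵥ x := by
  have hsymm : (S₁⁻¹ - S₂⁻¹)ᵀ = S₁⁻¹ - S₂⁻¹ := h₁.inv.isHermitian.sub h₂.inv.isHermitian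
  simp_rw [pd_log_gaussDensity_div h₁ h₂, neg_sq]
  calc ∑ i, ((S₁⁻¹ - S₂⁻¹) *ᵥ x) i ^ 2
    _ = (S₁⁻¹ - S₂⁻¹) *ᵥ x ⬝ᵥ (S₁⁻¹ - S₂⁻¹) *ᵥ x := by simp_rw [dotProduct, sq]
    _ = x ⬝ᵥ (S₁⁻¹ - S₂⁻¹) ^ 2 *ᵥ x := by
      rw [← dotProduct_transpose_mulVec, hsymm, mulVec_mulVec, sq]

theorem fisherInfo_gaussian_comm_general (h₁ : S₁.PosDef) (h₂ : S₂.PosDef) :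
    fisherInfo (gaussDensity S₁) (gaussDensity S₂) = ((S₁⁻¹ - S₂⁻¹) ^ 2 * S₁).trace :=
  calc fisherInfo (gaussDensity S₁) (gaussDensity S₂)
    _ = ∫ x, gaussDensity S₁ x • (x ⬝ᵥ (S₁⁻¹ - S₂⁻¹) ^ 2 *ᵥ x) := by
      simp_rw [fisherInfo, sum_pd_log_gaussDensity_div_sq h₁ h₂, smul_eq_mul]
    _ = ∫ x, x ⬝ᵥ (S₁⁻¹ - S₂⁻¹) ^ 2 *ᵥ x ∂multivariateGaussian 0 S₁ :=
      integral_gaussDensity_smul h₁ _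
    _ = ((S₁⁻¹ - S₂⁻¹) ^ 2 * S₁).trace :=
      integral_dotProduct_mulVec_multivariateGaussian h₁.posSemidef _

end FisherInfo

/-- Fisher information between two centered Gaussians with commuting covariance matrices:
`I(N(0,S₁)|N(0,S₂)) = Tr(S₂⁻² (S₂ − S₁)² S₁⁻¹)`. -/
theorem fisherInfo_gaussian_comm {d : ℕ} (S₁ S₂ : Matrix (Fin d) (Fin d) ℝ)
    (h₁ : S₁.PosDef) (h₂ : S₂.PosDef) (hcomm : S₁ * S₂ = S₂ * S₁) :
    fisherInfo (gaussDensity S₁) (gaussDensity S₂)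
      = ((S₂⁻¹) ^ 2 * (S₂ - S₁) ^ 2 * S₁⁻¹).trace := by
  rw [fisherInfo_gaussian_comm_general h₁ h₂, sq_inv_sub_inv_mul h₁.isUnit h₂.isUnit hcomm]
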